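/- There is a universal constant C > 0 such that for every ε with 0 < ε ≤ r, the squared Hellinger distance between an r-smoothed density and its shift by 2ε satisfies H²(f_r, f_r^{2ε}) ≤ (1/4)·KL(f_r ‖ f_r^{2ε}) + C·ε³/r³. -/

import Mathlib

/-!
Write `p = f_r`, `q = f_r^{2ε}`. On both sides one may add multiples of `q - p`, which has integral
zero, and this turns the claim into a pointwise one: `(√p - √q)² / 2` is at most
`p log (p/q) / 4 + (q - p) / 4` plus a remainder which vanishes where `q ≤ p` and is at most
`q (1 - p/q)³ / 4` where `p < q` (`pointwise_bound`). The quadratic terms cancel, which is where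
the factor `1/4` comes from, and boundedness of `1 - p/q` on `p < q` makes the remainder harmless
in the tails.

The remainder is controlled by a conditional Jensen inequality. Both `p` and `q` are mixtures over
`y ~ f` of Gaussians whose log-likelihood ratio `logRatio` is affine in `z = x - y`. Applying the
tangent-line inequality `cube_tangent` to each component and integrating against `f` gives
`q (1 - p/q)³ ≤ f * (φ(· - 2ε) |logRatio|³)`, and the integral of the right-hand side is a Gaussian
third moment, at most a constant times `(ε/r)³` (`dom_cube`).

The KL integrand must be integrable for its integral to be meaningful. It is bounded below by
`p - q`, and the log-sum inequality (`mul_log_le`) bounds it above by the convolution of `f` with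
an integrable kernel dominating `φ |logRatio|`. No moment assumption on `f` is needed.
-/

open MeasureTheory Real

noncomputable section

/-- The Gaussian density with mean 0 and variance `r ^ 2`. -/
def gaussPdf (r x : ℝ) : ℝ :=
  Real.exp (-(x ^ 2) / (2 * r ^ 2)) / Real.sqrt (2 * Real.pi * r ^ 2)

/-- The `r`-smoothed density `f_r`, i.e. the density of `Y + Z` where `Y ~ f` and
`Z ~ N(0, r²)` independent. -/
def smoothed (f : ℝ → ℝ) (r x : ℝ) : ℝ := ∫ y, f y * gaussPdf r (x - y)

/-- The score function `s_r = f_r' / f_r` of the smoothed density. -/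
def score (f : ℝ → ℝ) (r x : ℝ) : ℝ :=
  deriv (fun t => smoothed f r t) x / smoothed f r x

/-- The Fisher information `I_r = E_{x ~ f_r}[s_r(x)²]` of the smoothed density. -/
def fisherInfo (f : ℝ → ℝ) (r : ℝ) : ℝ := ∫ x, score f r x ^ 2 * smoothed f r x

/-- `f` is a probability density on `ℝ`. -/
def IsDensity (f : ℝ → ℝ) : Prop :=
  (∀ x, 0 ≤ f x) ∧ MeasureTheory.Integrable f ∧ (∫ x, f x) = 1

/-- The Kullback–Leibler divergence `∫ p log(p/q)` between densities on `ℝ`. -/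
def KLdiv (p q : ℝ → ℝ) : ℝ := ∫ x, p x * Real.log (p x / q x)

/-- The squared Hellinger distance `(1/2)∫(√p − √q)²` between densities on `ℝ`. -/
def hellingerSq (p q : ℝ → ℝ) : ℝ := (1 / 2) * ∫ x, (Real.sqrt (p x) - Real.sqrt (q x)) ^ 2

/-! ### Scalar inequalities -/

theorem scalar_ge {s : ℝ} (hs : 1 ≤ s) :
    (1 / 2) * (s - 1) ^ 2 ≤ (1 / 4) * (s ^ 2 * (2 * Real.log s)) + (1 - s ^ 2) / 4 := by
  have h := Real.le_log_one_add_of_nonneg (x := s - 1) (by linarith)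
  rw [show 1 + (s - 1) = s by ring, show s - 1 + 2 = s + 1 by ring] at h
  have h2 : (s - 1) ^ 3 ≥ 0 := by
    have : 0 ≤ s - 1 := by linarith
    positivity
  have h3 : s ^ 2 * (2 * (s - 1) / (s + 1)) ≤ s ^ 2 * Real.log s := by gcongr
  have h4 : (1 / 4) * (s ^ 2 * (2 * (2 * (s - 1) / (s + 1)))) + (1 - s ^ 2) / 4
      - (1 / 2) * (s - 1) ^ 2 = (s - 1) ^ 3 / (4 * (s + 1)) := by
    have : s + 1 ≠ 0 := by linarith
    field_simp
    ring
  have h5 : 0 ≤ (s - 1) ^ 3 / (4 * (s + 1)) := by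
    apply div_nonneg h2
    linarith
  linarith

theorem scalar_le {s : ℝ} (h0 : 0 < s) (hs : s ≤ 1) :
    (1 / 2) * (s - 1) ^ 2 ≤
      (1 / 4) * (s ^ 2 * (2 * Real.log s)) + (1 - s ^ 2) / 4 + (1 / 4) * (1 - s ^ 2) ^ 3 := by
  have h := Real.sinh_log h0
  have h1 : Real.sinh (Real.log s) ≤ Real.log s :=
    Real.sinh_le_self_iff.2 (Real.log_nonpos h0.le hs)
  rw [h] at h1
  have h3 : s ^ 2 * ((s - s⁻¹) / 2) ≤ s ^ 2 * Real.log s := by gcongr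
  have h4 : s ^ 2 * ((s - s⁻¹) / 2) = (s ^ 3 - s) / 2 := by field_simp
  have h5 : (1 - s) ^ 3 ≤ (1 - s ^ 2) ^ 3 := by
    have : 0 ≤ 1 - s := by linarith
    gcongr
    nlinarith
  nlinarith

/-- The Hellinger integrand at densities `p, q` is the KL integrand divided by `4`, up to a term
`(q - p) / 4` of mean zero and a cubic remainder that is only present where `p < q`. -/
theorem pointwise_bound {p q E : ℝ} (hp : 0 < p) (hq : 0 < q) (hE : 0 ≤ E)
    (h : p ≤ q → q * ((q - p) / q) ^ 3 ≤ E) :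
    (1 / 2) * (Real.sqrt p - Real.sqrt q) ^ 2 ≤
      (1 / 4) * (p * Real.log (p / q)) + (q - p) / 4 + (1 / 4) * E := by
  set s := Real.sqrt (p / q) with hs
  have hs0 : 0 < s := Real.sqrt_pos.2 (div_pos hp hq)
  have hs2 : s ^ 2 = p / q := Real.sq_sqrt (div_pos hp hq).le
  have hpq : p = q * s ^ 2 := by rw [hs2]; field_simp
  have hsp : Real.sqrt p = s * Real.sqrt q := by
    rw [hs, ← Real.sqrt_mul (div_pos hp hq).le]
    congr 1
    field_simp
  have hsq : Real.sqrt q ^ 2 = q := Real.sq_sqrt hq.le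
  have hlog : Real.log (p / q) = 2 * Real.log s := by
    rw [← hs2, Real.log_pow]
    norm_num
  have hL : (1 / 2) * (Real.sqrt p - Real.sqrt q) ^ 2 = q * ((1 / 2) * (s - 1) ^ 2) := by
    rw [hsp]
    linear_combination (1 / 2) * (s - 1) ^ 2 * hsq
  rw [hL, hlog]
  rcases le_total 1 s with h1 | h1
  · have := mul_le_mul_of_nonneg_left (scalar_ge h1) hq.le
    rw [hpq]
    linarith
  · have := mul_le_mul_of_nonneg_left (scalar_le hs0 h1) hq.le
    have hle : p ≤ q := by
      rw [hpq]
      have : s ^ 2 ≤ 1 := by nlinarith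
      nlinarith
    have h3 := h hle
    have h4 : (q - p) / q = 1 - s ^ 2 := by
      rw [hs2]
      field_simp
    rw [h4] at h3
    rw [hpq]
    linarith

/-- Tangent-line bound: the right-hand side is the tangent to `u ↦ u ^ 3` at `t`, evaluated at
`u = 1 - exp (-b) ≤ |b|`. -/
theorem cube_tangent {t b : ℝ} (ht : 0 ≤ t) :
    3 * t ^ 2 * (1 - Real.exp (-b)) - 2 * t ^ 3 ≤ |b| ^ 3 := by
  have h1 : 1 - Real.exp (-b) ≤ |b| := by
    have := Real.add_one_le_exp (-b)
    have := le_abs_self b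
    linarith
  have h2 : 3 * t ^ 2 * (1 - Real.exp (-b)) ≤ 3 * t ^ 2 * |b| := by gcongr
  have h3 : 0 ≤ (|b| - t) ^ 2 * (|b| + 2 * t) := by positivity
  nlinarith

/-! ### Convolution with an integrable kernel -/

/-- The convolution `f * g` on `ℝ`; `smoothed f r` is the case `g = gaussPdf r`. -/
def conv (f g : ℝ → ℝ) (x : ℝ) : ℝ := ∫ y, f y * g (x - y)

theorem conv_eq (f g : ℝ → ℝ) :
    conv f g = MeasureTheory.convolution f g (ContinuousLinearMap.mul ℝ ℝ) volume := rfl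

theorem conv_integrable {f g : ℝ → ℝ} (hf : Integrable f) (hg : Integrable g) :
    Integrable (conv f g) := by
  rw [conv_eq]
  exact hf.integrable_convolution _ hg

theorem conv_ae {f g : ℝ → ℝ} (hf : Integrable f) (hg : Integrable g) :
    ∀ᵐ x, Integrable (fun y => f y * g (x - y)) :=
  hf.ae_convolution_exists (ContinuousLinearMap.mul ℝ ℝ) hg

theorem conv_integral {f g : ℝ → ℝ} (hf : IsDensity f) (hg : Integrable g) :
    ∫ x, conv f g x = ∫ x, g x := by
  rw [conv_eq, integral_convolution _ hf.2.1 hg, hf.2.2]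
  simp

theorem conv_nonneg {f g : ℝ → ℝ} (hf : IsDensity f) (hg : ∀ x, 0 ≤ g x) (x : ℝ) :
    0 ≤ conv f g x := integral_nonneg fun y => mul_nonneg (hf.1 y) (hg _)

theorem conv_pos {f g : ℝ → ℝ} (hf : IsDensity f) (hg : ∀ x, 0 < g x) {x : ℝ}
    (hi : Integrable (fun y => f y * g (x - y))) : 0 < conv f g x := by
  unfold conv
  rw [integral_pos_iff_support_of_nonneg (fun y => mul_nonneg (hf.1 y) (hg _).le) hi]
  have h : Function.support (fun y => f y * g (x - y)) = Function.support f := by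
    ext y
    simp [(hg (x - y)).ne']
  rw [h, ← integral_pos_iff_support_of_nonneg hf.1 hf.2.1, hf.2.2]
  exact one_pos

/-- A pointwise linear inequality between three kernels passes to their convolutions with `f`. -/
theorem conv_lin {f g₁ g₂ g₃ : ℝ → ℝ} (hf : IsDensity f) (a b : ℝ)
    (h : ∀ z, a * g₁ z + b * g₂ z ≤ g₃ z) {x : ℝ}
    (h₁ : Integrable (fun y => f y * g₁ (x - y))) (h₂ : Integrable (fun y => f y * g₂ (x - y)))
    (h₃ : Integrable (fun y => f y * g₃ (x - y))) :
    a * conv f g₁ x + b * conv f g₂ x ≤ conv f g₃ x := by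
  unfold conv
  rw [← integral_const_mul, ← integral_const_mul,
    ← integral_add (h₁.const_mul a) (h₂.const_mul b)]
  refine integral_mono ((h₁.const_mul a).add (h₂.const_mul b)) h₃ fun y => ?_
  have := mul_le_mul_of_nonneg_left (h (x - y)) (hf.1 y)
  simp only
  linarith

/-! ### The Gaussian kernel and its log-likelihood ratio under a shift -/

theorem gaussPdf_pos {r : ℝ} (hr : 0 < r) (x : ℝ) : 0 < gaussPdf r x := by
  unfold gaussPdf
  positivity

theorem gaussPdf_integrable {r : ℝ} (hr : 0 < r) : Integrable (gaussPdf r) := by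
  have h := (integrable_exp_neg_mul_sq (b := 1 / (2 * r ^ 2)) (by positivity)).div_const
    (Real.sqrt (2 * Real.pi * r ^ 2))
  refine h.congr (Filter.Eventually.of_forall fun x => ?_)
  simp only [gaussPdf]
  congr 2
  ring

theorem gaussPdf_scale {r : ℝ} (hr : 0 < r) (x : ℝ) :
    gaussPdf r x = r⁻¹ * gaussPdf 1 (x / r) := by
  unfold gaussPdf
  rw [Real.sqrt_mul (by positivity : (0:ℝ) ≤ 2 * Real.pi) (r ^ 2), Real.sqrt_sq hr.le]
  have h : -(x ^ 2) / (2 * r ^ 2) = -((x / r) ^ 2) / (2 * 1 ^ 2) := by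
    field_simp
  rw [h]
  have : Real.sqrt (2 * Real.pi) ≠ 0 := by positivity
  simp only [one_pow, mul_one]
  field_simp

/-- `log (gaussPdf r (z - 2ε) / gaussPdf r z)`. -/
def logRatio (r ε z : ℝ) : ℝ := 2 * ε * (z - ε) / r ^ 2

theorem gaussPdf_shift {r : ℝ} (hr : 0 < r) (ε z : ℝ) :
    gaussPdf r (z - 2 * ε) = gaussPdf r z * Real.exp (logRatio r ε z) := by
  unfold gaussPdf logRatio
  rw [div_mul_eq_mul_div, ← Real.exp_add]
  congr 2
  field_simp
  ring

/-- A Gaussian with a polynomial weight dominating `(2 * (|t| + 1)) ^ 3`; its integral,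
increased by one to be visibly positive, is the universal constant in the final bound. -/
def momentKernel (t : ℝ) : ℝ := gaussPdf 1 t * (64 * (1 + t ^ 4))

theorem momentKernel_nonneg (t : ℝ) : 0 ≤ momentKernel t := by
  have := (gaussPdf_pos one_pos t).le
  unfold momentKernel
  positivity

theorem momentKernel_integrable : Integrable momentKernel := by
  have h := integrable_rpow_mul_exp_neg_mul_sq (b := 1 / 2) (by norm_num) (s := (4 : ℕ))
    (by norm_num)
  simp_rw [Real.rpow_natCast] at h
  have h2 := ((gaussPdf_integrable one_pos).const_mul 64).add
    (h.const_mul (64 / Real.sqrt (2 * Real.pi * 1 ^ 2)))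
  refine h2.congr (Filter.Eventually.of_forall fun x => ?_)
  simp only [gaussPdf, momentKernel, Pi.add_apply]
  rw [show -(x ^ 2) / (2 * 1 ^ 2) = -(1 / 2) * x ^ 2 by ring]
  ring

theorem poly_dom (t : ℝ) : (2 * (|t| + 1)) ^ 3 ≤ 64 * (1 + t ^ 4) := by
  have h4 : t ^ 4 = |t| ^ 4 := by
    rw [show (4 : ℕ) = 2 * 2 from rfl, pow_mul, pow_mul, sq_abs]
  rw [h4]
  nlinarith [abs_nonneg t, sq_nonneg (|t| - 1), sq_nonneg (|t| ^ 2 - 1),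
    mul_nonneg (abs_nonneg t) (sq_nonneg (|t| - 1)), sq_nonneg (|t| ^ 2 - |t|)]

/-- `momentKernel` rescaled to the width `r`. -/
def scaledKernel (r z : ℝ) : ℝ := r⁻¹ * momentKernel (z / r)

theorem scaledKernel_nonneg {r : ℝ} (hr : 0 < r) (z : ℝ) : 0 ≤ scaledKernel r z :=
  mul_nonneg (inv_nonneg.2 hr.le) (momentKernel_nonneg _)

theorem scaledKernel_integrable {r : ℝ} (hr : 0 < r) : Integrable (scaledKernel r) :=
  (momentKernel_integrable.comp_div hr.ne').const_mul _

theorem scaledKernel_integral {r : ℝ} (hr : 0 < r) :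
    ∫ z, scaledKernel r z = ∫ t, momentKernel t := by
  unfold scaledKernel
  rw [integral_const_mul, Measure.integral_comp_div, abs_of_pos hr, smul_eq_mul,
    inv_mul_cancel_left₀ hr.ne']

theorem gauss_dom {r : ℝ} (hr : 0 < r) (z : ℝ) :
    gaussPdf r z * (2 * (|z / r| + 1)) ^ 3 ≤ scaledKernel r z := by
  rw [gaussPdf_scale hr, scaledKernel, momentKernel, mul_assoc]
  have := (gaussPdf_pos one_pos (z / r)).le
  gcongr
  exact poly_dom _

theorem abs_logRatio_le {r ε z w : ℝ} (hr : 0 < r) (hε : 0 < ε) (hεr : ε ≤ r)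
    (h : |z - ε| ≤ |w| + ε) : |logRatio r ε z| ≤ ε / r * (2 * (|w / r| + 1)) := by
  unfold logRatio
  rw [abs_div, abs_mul, abs_of_pos (by positivity : 0 < 2 * ε),
    abs_of_pos (by positivity : 0 < r ^ 2), abs_div, abs_of_pos hr]
  have h1 : ε / r * (2 * (|w| / r + 1)) = 2 * ε * (|w| + r) / r ^ 2 := by
    field_simp
  rw [h1]
  gcongr
  linarith

theorem dom_one {r ε : ℝ} (hr : 0 < r) (hε : 0 < ε) (hεr : ε ≤ r) (z : ℝ) :
    gaussPdf r z * |logRatio r ε z| ≤ scaledKernel r z := by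
  refine le_trans ?_ (gauss_dom hr z)
  have hg := (gaussPdf_pos hr z).le
  gcongr
  have h := abs_logRatio_le hr hε hεr (z := z) (w := z) (by
    have := abs_sub z ε
    rwa [abs_of_pos hε] at this)
  have h1 : ε / r ≤ 1 := (div_le_one hr).2 hεr
  have h2 : 0 ≤ |z / r| := abs_nonneg _
  have h3 : 1 ≤ 2 * (|z / r| + 1) := by linarith
  calc _ ≤ _ := h
    _ ≤ 1 * (2 * (|z / r| + 1)) := by gcongr
    _ = (2 * (|z / r| + 1)) ^ 1 := by ring
    _ ≤ _ := pow_le_pow_right₀ h3 (by norm_num)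

theorem dom_cube {r ε : ℝ} (hr : 0 < r) (hε : 0 < ε) (hεr : ε ≤ r) (z : ℝ) :
    gaussPdf r (z - 2 * ε) * |logRatio r ε z| ^ 3 ≤
      (ε / r) ^ 3 * scaledKernel r (z - 2 * ε) := by
  have hg := (gaussPdf_pos hr (z - 2 * ε)).le
  have h := abs_logRatio_le hr hε hεr (z := z) (w := z - 2 * ε) (by
    have := abs_add_le (z - 2 * ε) ε
    rw [abs_of_pos hε] at this
    rwa [show z - 2 * ε + ε = z - ε by ring] at this)
  calc _ ≤ gaussPdf r (z - 2 * ε) * (ε / r * (2 * (|(z - 2 * ε) / r| + 1))) ^ 3 := by gcongr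
    _ = (ε / r) ^ 3 * (gaussPdf r (z - 2 * ε) * (2 * (|(z - 2 * ε) / r| + 1)) ^ 3) := by ring
    _ ≤ _ := by
      have := gauss_dom hr (z - 2 * ε)
      gcongr

/-! ### The smoothed density and its shift -/

theorem mul_log_le {p q B : ℝ} (hp : 0 < p) (hq : 0 < q)
    (h : ∀ c, Real.exp c * (1 - c) * p + -Real.exp c * B ≤ q) : p * Real.log (p / q) ≤ B := by
  -- `c = -B / p` maximises the left-hand side and gives `exp c * p ≤ q`.
  have h1 := h (-B / p)
  have h2 : Real.exp (-B / p) * (1 - -B / p) * p + -Real.exp (-B / p) * B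
      = Real.exp (-B / p) * p := by
    field_simp
    ring
  rw [h2, ← le_div_iff₀ hp] at h1
  have h3 := (Real.le_log_iff_exp_le (div_pos hq hp)).2 h1
  rw [div_le_iff₀ hp, Real.log_div hq.ne' hp.ne'] at h3
  rw [Real.log_div hp.ne' hq.ne']
  linarith

theorem sub_le_mul_log {p q : ℝ} (hp : 0 < p) (hq : 0 < q) : p - q ≤ p * Real.log (p / q) := by
  have h := Real.one_sub_inv_le_log_of_pos (div_pos hp hq)
  have h2 := mul_le_mul_of_nonneg_left h hp.le
  have h3 : p * (1 - (p / q)⁻¹) = p - q := by field_simp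
  linarith

/-- There is a universal constant `C > 0` such that for `0 < ε ≤ r`,
`H²(f_r, f_r^{2ε}) ≤ (1/4)·KL(f_r ‖ f_r^{2ε}) + C·ε³/r³`. -/
theorem hellinger_shifted_smoothed_bound :
    ∃ C : ℝ, 0 < C ∧ ∀ (f : ℝ → ℝ) (r : ℝ), IsDensity f → 0 < r →
      ∀ ε : ℝ, 0 < ε → ε ≤ r →
      hellingerSq (fun x => smoothed f r x) (fun x => smoothed f r (x - 2 * ε)) ≤
        (1 / 4) * KLdiv (fun x => smoothed f r x) (fun x => smoothed f r (x - 2 * ε)) +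
          C * ε ^ 3 / r ^ 3 := by
  refine ⟨(∫ t, momentKernel t) + 1, ?_, ?_⟩
  · have : 0 ≤ ∫ t, momentKernel t := integral_nonneg momentKernel_nonneg
    linarith
  intro f r hf hr ε hε hεr
  set φ : ℝ → ℝ := gaussPdf r with hφ
  set ψ : ℝ → ℝ := fun z => gaussPdf r (z - 2 * ε) with hψ
  set B : ℝ → ℝ := scaledKernel r with hB
  set W : ℝ → ℝ := fun z => (ε / r) ^ 3 * scaledKernel r (z - 2 * ε) with hW
  have hp_eq : (fun x => smoothed f r x) = conv f φ := rfl
  have hq_eq : (fun x => smoothed f r (x - 2 * ε)) = conv f ψ := by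
    funext x
    simp only [smoothed, conv, hψ, sub_right_comm]
  rw [hp_eq, hq_eq]
  have iφ : Integrable φ := gaussPdf_integrable hr
  have iψ : Integrable ψ := iφ.comp_sub_right (2 * ε)
  have iB : Integrable B := scaledKernel_integrable hr
  have iW : Integrable W := (iB.comp_sub_right (2 * ε)).const_mul _
  have hψφ : ∀ z, ψ z = φ z * Real.exp (logRatio r ε z) := gaussPdf_shift hr ε
  -- At almost every `x` the four convolutions converge absolutely, and both facts follow from
  -- pointwise inequalities between kernels.
  have key : ∀ᵐ x, 0 < conv f φ x ∧ 0 < conv f ψ x ∧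
      conv f φ x * Real.log (conv f φ x / conv f ψ x) ≤ conv f B x ∧
      (conv f φ x ≤ conv f ψ x →
        conv f ψ x * ((conv f ψ x - conv f φ x) / conv f ψ x) ^ 3 ≤ conv f W x) := by
    filter_upwards [conv_ae hf.2.1 iφ, conv_ae hf.2.1 iψ, conv_ae hf.2.1 iB, conv_ae hf.2.1 iW]
      with x h1 h2 h3 h4
    have hp : 0 < conv f φ x := conv_pos hf (gaussPdf_pos hr) h1
    have hq : 0 < conv f ψ x := conv_pos hf (fun z => gaussPdf_pos hr _) h2
    refine ⟨hp, hq, mul_log_le hp hq fun c => ?_, fun hle => ?_⟩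
    · refine conv_lin hf _ _ (fun z => ?_) h1 h3 h2
      have hd := dom_one hr hε hεr z
      have hg := gaussPdf_pos hr z
      have hb := neg_abs_le (logRatio r ε z)
      have he := Real.add_one_le_exp (logRatio r ε z - c)
      rw [hψφ, show Real.exp (logRatio r ε z)
        = Real.exp c * Real.exp (logRatio r ε z - c) by rw [← Real.exp_add]; ring_nf]
      have e1 : (1 - c) * φ z - B z ≤ φ z * Real.exp (logRatio r ε z - c) := by
        have : φ z * (1 - c - |logRatio r ε z|) ≤ φ z * Real.exp (logRatio r ε z - c) :=
          mul_le_mul_of_nonneg_left (by linarith) hg.le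
        simp only [hB, hφ] at *
        linarith
      have := mul_le_mul_of_nonneg_left e1 (Real.exp_pos c).le
      linarith
    · set p := conv f φ x
      set q := conv f ψ x
      set t := (q - p) / q with ht
      have ht0 : 0 ≤ t := div_nonneg (by linarith) hq.le
      have h := conv_lin hf (3 * t ^ 2 - 2 * t ^ 3) (-(3 * t ^ 2)) (g₁ := ψ) (g₂ := φ) (g₃ := W)
        (fun z => ?_) h2 h1 h4
      · have hqt : q - p = q * t := by rw [ht]; field_simp
        calc q * t ^ 3 = (3 * t ^ 2 - 2 * t ^ 3) * q + -(3 * t ^ 2) * p := by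
              linear_combination -3 * t ^ 2 * hqt
          _ ≤ _ := h
      · have hg := gaussPdf_pos hr (z - 2 * ε)
        have hφψ : φ z = ψ z * Real.exp (-logRatio r ε z) := by
          rw [hψφ, mul_assoc, ← Real.exp_add, add_neg_cancel, Real.exp_zero, mul_one]
        have hd := dom_cube hr hε hεr z
        have hc := mul_le_mul_of_nonneg_left (cube_tangent (b := logRatio r ε z) ht0) hg.le
        rw [hφψ]
        simp only [hψ, hW]
        linarith
  have ip := conv_integrable hf.2.1 iφ
  have iq := conv_integrable hf.2.1 iψ
  have iBc := conv_integrable hf.2.1 iB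
  have iWc := conv_integrable hf.2.1 iW
  have iKL : Integrable (fun x => conv f φ x * Real.log (conv f φ x / conv f ψ x)) := by
    refine Integrable.mono' ((ip.add iq).add iBc) ?_ ?_
    · exact ip.aestronglyMeasurable.mul
        (Real.measurable_log.comp_aemeasurable
          (ip.aemeasurable.div iq.aemeasurable)).aestronglyMeasurable
    · filter_upwards [key] with x hx
      obtain ⟨hp, hq, h1, -⟩ := hx
      have h2 := sub_le_mul_log hp hq
      have h3 := conv_nonneg hf (scaledKernel_nonneg hr) x
      rw [Real.norm_eq_abs, abs_le]
      simp only [Pi.add_apply]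
      constructor <;> linarith
  have hWi : ∫ x, conv f W x = (ε / r) ^ 3 * ∫ t, momentKernel t := by
    rw [conv_integral hf iW, integral_const_mul,
      integral_sub_right_eq_self (scaledKernel r) (2 * ε), scaledKernel_integral hr]
  have hpq : ∫ x, conv f ψ x = ∫ x, conv f φ x := by
    rw [conv_integral hf iφ, conv_integral hf iψ]
    exact integral_sub_right_eq_self (gaussPdf r) (2 * ε)
  have i3 : Integrable (fun x => (conv f ψ x - conv f φ x) / 4) := (iq.sub ip).div_const 4
  have i1 : Integrable (fun x => (1 / 4) * (conv f φ x * Real.log (conv f φ x / conv f ψ x))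
      + (conv f ψ x - conv f φ x) / 4) := (iKL.const_mul (1 / 4)).add i3
  have i2 := iWc.const_mul (1 / 4)
  have main : ∫ x, (1 / 2) * (Real.sqrt (conv f φ x) - Real.sqrt (conv f ψ x)) ^ 2 ≤
      ∫ x, (((1 / 4) * (conv f φ x * Real.log (conv f φ x / conv f ψ x))
        + (conv f ψ x - conv f φ x) / 4) + (1 / 4) * conv f W x) := by
    refine integral_mono_of_nonneg (Filter.Eventually.of_forall fun x => by positivity)
      (i1.add i2) ?_
    filter_upwards [key] with x hx
    obtain ⟨hp, hq, -, h⟩ := hx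
    refine pointwise_bound hp hq (conv_nonneg hf (fun z => ?_) x) h
    exact mul_nonneg (by positivity) (scaledKernel_nonneg hr _)
  have hsum : ∫ x, (((1 / 4) * (conv f φ x * Real.log (conv f φ x / conv f ψ x))
        + (conv f ψ x - conv f φ x) / 4) + (1 / 4) * conv f W x)
      = (1 / 4) * (∫ x, conv f φ x * Real.log (conv f φ x / conv f ψ x))
        + (1 / 4) * ((ε / r) ^ 3 * ∫ t, momentKernel t) := by
    rw [integral_add i1 i2, integral_add (iKL.const_mul (1 / 4)) i3,
      integral_const_mul, integral_const_mul, integral_div, integral_sub iq ip, hpq, hWi]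
    ring
  rw [hsum, integral_const_mul] at main
  unfold hellingerSq KLdiv
  have hK : 0 ≤ ∫ t, momentKernel t := integral_nonneg momentKernel_nonneg
  have hρ : 0 ≤ (ε / r) ^ 3 := by positivity
  have hfin : ((∫ t, momentKernel t) + 1) * ε ^ 3 / r ^ 3
      = (ε / r) ^ 3 * (∫ t, momentKernel t) + (ε / r) ^ 3 := by
    rw [div_pow]
    ring
  rw [hfin]
  have hKρ := mul_nonneg hρ hK
  linarith

end
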